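/- arXiv:2201.05075 — 2 statements merged into one kernel-verified Lean document; each statement's English description precedes it below -/
import Mathlib

section
/- The Černý conjecture holds for completely reachable automata with two input letters: if A = ⟨Q, Σ⟩ is a completely reachable DFA with |Σ| = 2 and |Q| = n, then A has a reset word of length at most (n−1)². -/
open Finset

/-- The action of a word (list of letters) on a state, applying letters left to right. -/
def act {Q A : Type*} (δ : Q → A → Q) (q : Q) (w : List A) : Q := w.foldl δ q

/-- The image of a set of states under the action of a word. -/
def img {Q A : Type*} [DecidableEq Q] (δ : Q → A → Q) (P : Finset Q) (w : List A) : Finset Q :=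
  P.image (fun q => act δ q w)

/-- `excl δ w = Q \ Q·w`. -/
def excl {Q A : Type*} [Fintype Q] [DecidableEq Q] (δ : Q → A → Q) (w : List A) : Finset Q :=
  Finset.univ \ img δ Finset.univ w

/-- `dupl δ w` : the set of states with at least two preimages under the action of `w`. -/
def dupl {Q A : Type*} [Fintype Q] [DecidableEq Q] (δ : Q → A → Q) (w : List A) : Finset Q :=
  Finset.univ.filter (fun p => ∃ q₁ q₂ : Q, q₁ ≠ q₂ ∧ act δ q₁ w = p ∧ act δ q₂ w = p)

/-- A DFA is completely reachable if every nonempty subset of states is the image of the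
full state set under the action of some word. -/
def CompletelyReachable {Q A : Type*} [Fintype Q] [DecidableEq Q] (δ : Q → A → Q) : Prop :=
  ∀ P : Finset Q, P.Nonempty → ∃ w : List A, img δ Finset.univ w = P

/-!
Suppose a letter `b` permutes the `n` states cyclically and every letter misses at most one state.
It suffices to enlarge every proper nonempty set `S` by taking its preimage under a word of length
at most `n`: starting from a two-element preimage of a singleton, `n - 2` such words follow one
letter, and `1 + n (n - 2) = (n - 1) ^ 2`.

Let `r` be the number of rotations of `S`, i.e. of distinct preimages of `S` under powers of `b`.
The preimages of `S` under `v bʲ`, `j < r`, have average size `#S`, so one of them is larger than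
`S` as soon as one of them has a different size. A letter `c` missing a state `e` and hitting a
state `d` twice preserves the size of the preimage of `T` exactly when `d ∈ T ↔ e ∈ T`. The
rotations of `S` cut the states into at least `r` classes, so by Moore's partition refinement a
word `u` of length at most `n - r` sends some such `d` and `e` to different classes, and then `v`
can be taken to be `u` or `c u`.

If all complements of points are reachable, then each of them is obtained from the image of a
letter missing a single state by applying permutation letters. For two letters this forces either
`n ≤ 2` or the situation above.
-/

open Function

section ActionOnSets

variable {Q A : Type*}

lemma act_append (δ : Q → A → Q) (q : Q) (u v : List A) :
    act δ q (u ++ v) = act δ (act δ q u) v :=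
  List.foldl_append

lemma act_replicate (δ : Q → A → Q) (q : Q) (b : A) (k : ℕ) :
    act δ q (List.replicate k b) = (δ · b)^[k] q := by
  induction k generalizing q with
  | zero => rfl
  | succ _ ih => exact ih (δ q b)

variable [DecidableEq Q]

lemma mem_img_univ [Fintype Q] {δ : Q → A → Q} {w : List A} {q : Q} :
    q ∈ img δ univ w ↔ ∃ p, act δ p w = q := by
  simp only [img, mem_image, mem_univ, true_and]

/-- The preimage `S·w⁻¹` of a set of states under the action of a word. -/
def preimg [Fintype Q] (δ : Q → A → Q) (S : Finset Q) (w : List A) : Finset Q :=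
  {q | act δ q w ∈ S}

variable [Fintype Q]

@[simp]
lemma mem_preimg {δ : Q → A → Q} {S : Finset Q} {w : List A} {q : Q} :
    q ∈ preimg δ S w ↔ act δ q w ∈ S :=
  mem_filter_univ q

lemma preimg_nil (δ : Q → A → Q) (S : Finset Q) : preimg δ S [] = S := by
  ext q
  exact mem_preimg

lemma preimg_append (δ : Q → A → Q) (S : Finset Q) (u v : List A) :
    preimg δ S (u ++ v) = preimg δ (preimg δ S v) u := by
  ext q
  simp only [mem_preimg, act_append]

lemma preimg_cons (δ : Q → A → Q) (S : Finset Q) (c : A) (w : List A) :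
    preimg δ S (c :: w) = ({q | δ q c ∈ preimg δ S w} : Finset Q) := by
  ext q
  simp only [mem_preimg, mem_filter_univ]
  rfl

lemma exists_card_preimg_cons_ne {δ : Q → A → Q} {S : Finset Q} {w : List A}
    (hw : #(preimg δ S w) ≠ #S) : ∃ c u, #(preimg δ S (c :: u)) ≠ #(preimg δ S u) := by
  induction w with
  | nil => exact absurd (congrArg card (preimg_nil δ S)) hw
  | cons c u ih =>
    by_cases hu : #(preimg δ S u) = #S
    · exact ⟨c, u, hu ▸ hw⟩
    · exact ih hu

lemma img_univ_eq_singleton_of_preimg_eq_univ [Nonempty Q] {δ : Q → A → Q} {q : Q} {w : List A}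
    (hw : preimg δ {q} w = univ) : img δ univ w = {q} := by
  have hact : ∀ p, act δ p w = q := fun p ↦ by simpa using hw.ge (mem_univ p)
  simp only [img, hact, image_const univ_nonempty]

lemma card_preimg_ne_of_card_img_univ_eq_one {δ : Q → A → Q} {w : List A}
    (hw : #(img δ univ w) = 1) {S : Finset Q} (hne : S.Nonempty) (hS : S ≠ univ) :
    #(preimg δ S w) ≠ #S := by
  obtain ⟨q, hq⟩ := card_eq_one.mp hw
  have hact (p : Q) : act δ p w = q := mem_singleton.mp (hq.le (mem_img_univ.mpr ⟨p, rfl⟩))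
  by_cases hqS : q ∈ S
  · have huniv : preimg δ S w = univ := by simp [preimg, hact, hqS]
    rw [huniv, card_univ]
    exact (card_lt_univ_of_notMem (not_forall.mp (mt eq_univ_of_forall hS)).choose_spec).ne'
  · have hempty : preimg δ S w = ∅ := by simp [preimg, hact, hqS]
    rw [hempty, card_empty]
    exact hne.card_pos.ne

lemma exists_preimg_eq_univ_of_extension {δ : Q → A → Q} {ℓ : ℕ}
    (hext : ∀ S : Finset Q, S.Nonempty → S ≠ univ →
      ∃ w : List A, w.length ≤ ℓ ∧ #S < #(preimg δ S w))
    {S : Finset Q} (hS : S.Nonempty) {k : ℕ} (hk : Fintype.card Q ≤ #S + k) :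
    ∃ w : List A, preimg δ S w = univ ∧ w.length ≤ k * ℓ := by
  induction k generalizing S with
  | zero => exact ⟨[], (preimg_nil δ S).trans ((card_eq_iff_eq_univ S).mp
      ((card_le_univ S).antisymm hk)), Nat.zero_le _⟩
  | succ k ih =>
    by_cases huniv : S = univ
    · exact ⟨[], (preimg_nil δ S).trans huniv, Nat.zero_le _⟩
    obtain ⟨v, hvlen, hv⟩ := hext S hS huniv
    obtain ⟨w, hw, hwlen⟩ := ih (card_pos.mp (by omega)) (show _ ≤ #(preimg δ S v) + k by omega)
    refine ⟨w ++ v, (preimg_append δ S w v).trans hw, ?_⟩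
    rw [List.length_append, Nat.succ_mul]
    omega

end ActionOnSets

section Refinement

lemma quotient_map_id_surjective_of_le {α : Type*} {E F : Setoid α} (h : E ≤ F) :
    Surjective (Quotient.map id h) :=
  Quotient.ind fun x ↦ ⟨Quotient.mk E x, rfl⟩

lemma card_quotient_le_of_le {α : Type*} [Finite α] {E F : Setoid α} (h : E ≤ F) :
    Nat.card (Quotient F) ≤ Nat.card (Quotient E) :=
  Nat.card_le_card_of_surjective (Quotient.map id h) (quotient_map_id_surjective_of_le h)

lemma eq_of_le_of_card_quotient_le {α : Type*} [Finite α] {E F : Setoid α} (h : E ≤ F)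
    (hcard : Nat.card (Quotient E) ≤ Nat.card (Quotient F)) : E = F := by
  have hinj : Injective (Quotient.map id h) :=
    ((quotient_map_id_surjective_of_le h).bijective_of_nat_card_le hcard).injective
  exact h.antisymm fun x y hxy ↦ Quotient.exact (hinj (Quotient.sound hxy))

variable {Q A : Type*}

/-- One round of Moore's partition refinement: two states stay equivalent if they are equivalent
and each letter sends them to equivalent states. -/
def mooreRefine (δ : Q → A → Q) (E : Setoid Q) : Setoid Q where
  r x y := E x y ∧ ∀ c, E (δ x c) (δ y c)
  iseqv := ⟨fun _ ↦ ⟨E.refl _, fun _ ↦ E.refl _⟩, fun h ↦ ⟨E.symm h.1, fun c ↦ E.symm (h.2 c)⟩,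
    fun h h' ↦ ⟨E.trans h.1 h'.1, fun c ↦ E.trans (h.2 c) (h'.2 c)⟩⟩

lemma mooreRefine_le (δ : Q → A → Q) (E : Setoid Q) : mooreRefine δ E ≤ E :=
  fun _ _ h ↦ h.1

lemma mooreRefine_iterate_iff (δ : Q → A → Q) (E : Setoid Q) (i : ℕ) (x y : Q) :
    ((mooreRefine δ)^[i] E) x y ↔
      ∀ u : List A, u.length ≤ i → E (act δ x u) (act δ y u) := by
  induction i generalizing x y with
  | zero =>
    simp only [Nat.le_zero, List.length_eq_zero_iff, forall_eq]
    rfl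
  | succ i ih =>
    rw [iterate_succ_apply']
    constructor
    · rintro ⟨hxy, hletter⟩ (_ | ⟨c, u⟩) hu
      · exact (ih x y).mp hxy [] (Nat.zero_le i)
      · exact (ih _ _).mp (hletter c) u (Nat.le_of_succ_le_succ hu)
    · intro h
      exact ⟨(ih x y).mpr fun u hu ↦ h u (hu.trans i.le_succ),
        fun c ↦ (ih _ _).mpr fun u hu ↦ h (c :: u) (Nat.succ_le_succ hu)⟩

lemma mooreRefine_iterate_stabilises [Finite Q] (δ : Q → A → Q) (E : Setoid Q) {i : ℕ}
    (hi : Nat.card Q - Nat.card (Quotient E) ≤ i) :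
    (mooreRefine δ)^[i] E = (mooreRefine δ)^[Nat.card Q - Nat.card (Quotient E)] E := by
  let R (m : ℕ) : Setoid Q := (mooreRefine δ)^[m] E
  let classes (m : ℕ) : ℕ := Nat.card (Quotient (R m))
  have hsucc (m : ℕ) : R (m + 1) = mooreRefine δ (R m) := iterate_succ_apply' ..
  have hanti : Antitone R :=
    antitone_nat_of_succ_le fun m ↦ (hsucc m).trans_le (mooreRefine_le δ (R m))
  have hmono : Monotone classes := fun _ _ h ↦ card_quotient_le_of_le (hanti h)
  have hle (m : ℕ) : classes m ≤ Nat.card Q :=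
    Nat.card_le_card_of_surjective _ Quotient.mk_surjective
  have hR_eq {m m' : ℕ} (h : m ≤ m') (hcard : classes m - classes 0 = classes m' - classes 0) :
      R m' = R m := by
    have h0 := hmono m.zero_le
    have h0' := hmono m'.zero_le
    exact eq_of_le_of_card_quotient_le (hanti h) (show classes m' ≤ classes m by omega)
  refine hR_eq hi (Nat.stabilises_of_monotone (f := fun m ↦ classes m - classes 0)
    (fun _ _ h ↦ Nat.sub_le_sub_right (hmono h) _) (fun m ↦ Nat.sub_le_sub_right (hle m) _)
    (fun m hm ↦ ?_) hi).symm
  have hfix : R (m + 2) = R (m + 1) :=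
    (hsucc (m + 1)).trans ((congrArg (mooreRefine δ) (hR_eq m.le_succ hm)).trans (hsucc m).symm)
  simp only [classes, hfix]

theorem exists_short_separating_word [Finite Q] {δ : Q → A → Q} {E : Setoid Q} {x y : Q}
    {w : List A} (hw : ¬ E (act δ x w) (act δ y w)) :
    ∃ u : List A, u.length ≤ Nat.card Q - Nat.card (Quotient E) ∧
      ¬ E (act δ x u) (act δ y u) := by
  by_contra! hshort
  have hR := (mooreRefine_iterate_iff δ E _ x y).mpr hshort
  rw [← mooreRefine_iterate_stabilises δ E (le_max_left _ w.length)] at hR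
  exact hw ((mooreRefine_iterate_iff δ E _ x y).mp hR w (le_max_right ..))

end Refinement

section Circular

variable {α : Type*} {β : α → α}

/-- A self-map is circular if every point is reached from every other one by iterating it; on a
finite type these are the cyclic permutations of the whole type. -/
def IsCircular (β : α → α) : Prop := ∀ x y, ∃ k, β^[k] x = y

lemma isCircular_of_bijective_of_orbit_eq_univ [Finite α] (hβ : Bijective β) {e : α}
    (he : ∀ x, ∃ k, β^[k] e = x) : IsCircular β := by
  let σ : Equiv.Perm α := Equiv.ofBijective β hβ
  have hσ (k : ℕ) (x : α) : (σ ^ k) x = β^[k] x := congrFun (Equiv.Perm.iterate_eq_pow σ k).symm x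
  have hcycle (x : α) : σ.SameCycle e x := by
    obtain ⟨k, hk⟩ := he x
    exact ⟨k, (hσ k e).trans hk⟩
  intro x y
  obtain ⟨k, hk⟩ := ((hcycle x).symm.trans (hcycle y)).exists_nat_pow_eq
  exact ⟨k, (hσ k x).symm.trans hk⟩

namespace IsCircular

lemma surjective (hβ : IsCircular β) : Surjective β := fun y ↦ by
  obtain ⟨k, hk⟩ := hβ (β y) y
  exact ⟨β^[k] y, by rw [← iterate_succ_apply' β, iterate_succ_apply, hk]⟩

lemma exists_pos_iterate_eq_id (hβ : IsCircular β) : ∃ k, 0 < k ∧ β^[k] = id := by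
  rcases isEmpty_or_nonempty α with _ | ⟨⟨x⟩⟩
  · exact ⟨1, one_pos, Subsingleton.elim _ _⟩
  obtain ⟨k, hk⟩ := hβ (β x) x
  refine ⟨k + 1, k.succ_pos, funext fun y ↦ ?_⟩
  obtain ⟨l, rfl⟩ := hβ x y
  rw [(Commute.iterate_iterate_self β (k + 1) l).eq, iterate_succ_apply, hk, id]

lemma minimalPeriod_preimage_pos (hβ : IsCircular β) (S : Set α) :
    0 < minimalPeriod (Set.preimage β) S := by
  obtain ⟨k, hk, hid⟩ := hβ.exists_pos_iterate_eq_id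
  refine IsPeriodicPt.minimalPeriod_pos hk ?_
  rw [IsPeriodicPt, IsFixedPt, ← Set.preimage_iterate_eq, hid, Set.preimage_id]

end IsCircular

lemma periodic_iterate_mem (β : α → α) (S : Set α) (x : α) :
    Periodic (fun j ↦ β^[j] x ∈ S) (minimalPeriod (Set.preimage β) S) := fun j ↦ by
  have hS : β^[minimalPeriod (Set.preimage β) S] ⁻¹' S = S := by
    rw [Set.preimage_iterate_eq]
    exact iterate_minimalPeriod
  simp only
  rw [add_comm, iterate_add_apply, ← Set.mem_preimage, hS]

lemma IsCircular.count_iterate_mem_eq (hβ : IsCircular β) (S : Set α) [DecidablePred (· ∈ S)]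
    (x y : α) :
    Nat.count (fun j ↦ β^[j] x ∈ S) (minimalPeriod (Set.preimage β) S) =
      Nat.count (fun j ↦ β^[j] y ∈ S) (minimalPeriod (Set.preimage β) S) := by
  obtain ⟨k, rfl⟩ := hβ y x
  rw [← Nat.filter_Ico_card_eq_of_periodic k _ _ (periodic_iterate_mem β S y),
    Nat.count_eq_card_filter_range, range_eq_Ico, card_filter, card_filter,
    sum_Ico_eq_sum_range, sum_Ico_eq_sum_range]
  simp only [← iterate_add_apply, Nat.sub_zero, zero_add, add_comm k, Nat.add_sub_cancel]

/-- The partition of the points according to which of the iterated preimages of `S` under `β`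
contain them. -/
def rotationSetoid (β : α → α) (S : Set α) : Setoid α :=
  Setoid.ker fun x j ↦ β^[j] x ∈ S

lemma rotationSetoid_iff {S : Set α} {x y : α} :
    rotationSetoid β S x y ↔ ∀ j, β^[j] x ∈ S ↔ β^[j] y ∈ S :=
  funext_iff.trans (forall_congr' fun _ ↦ eq_iff_iff)

lemma exists_lt_minimalPeriod_of_not_rotationSetoid {S : Set α}
    (hS : 0 < minimalPeriod (Set.preimage β) S) {x y : α} (hxy : ¬ rotationSetoid β S x y) :
    ∃ j < minimalPeriod (Set.preimage β) S, ¬ (β^[j] x ∈ S ↔ β^[j] y ∈ S) := by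
  obtain ⟨j, hj⟩ := not_forall.mp (mt rotationSetoid_iff.mpr hxy)
  refine ⟨j % _, Nat.mod_lt j hS, ?_⟩
  rwa [← (periodic_iterate_mem β S x).map_mod_nat, ← (periodic_iterate_mem β S y).map_mod_nat,
    eq_iff_iff.symm.eq, eq_iff_iff] at hj

lemma IsCircular.minimalPeriod_le_card_quotient [Finite α] [Nonempty α] (hβ : IsCircular β)
    (S : Set α) :
    minimalPeriod (Set.preimage β) S ≤ Nat.card (Quotient (rotationSetoid β S)) := by
  obtain ⟨x⟩ := ‹Nonempty α›
  let f (i : Fin (minimalPeriod (Set.preimage β) S)) : Quotient (rotationSetoid β S) :=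
    Quotient.mk _ (β^[i] x)
  have hf : Injective f := fun i j hij ↦ by
    have hrel := rotationSetoid_iff.mp (Quotient.exact hij)
    have hrot : (Set.preimage β)^[i] S = (Set.preimage β)^[j] S := by
      ext y
      obtain ⟨k, rfl⟩ := hβ x y
      simpa only [← Set.preimage_iterate_eq, Set.mem_preimage, ← iterate_add_apply, add_comm]
        using hrel k
    exact Fin.ext (iterate_injOn_Iio_minimalPeriod i.2 j.2 hrot)
  simpa only [Nat.card_fin] using Nat.card_le_card_of_injective f hf

end Circular

section DefectOne

variable {α : Type*} [Fintype α] [DecidableEq α]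

lemma exists_update_bijective [Nonempty α] {f : α → α}
    (hf : Fintype.card α ≤ #(univ.image f) + 1) : ∃ p e, Bijective (update f p e) := by
  by_cases hinj : Injective f
  · obtain ⟨p⟩ := ‹Nonempty α›
    exact ⟨p, f p, by rwa [update_eq_self, ← Finite.injective_iff_bijective]⟩
  obtain ⟨e, he⟩ := not_forall.mp (mt Finite.injective_iff_surjective.mpr hinj)
  obtain ⟨p, q, hpq, hne⟩ := not_injective_iff.mp hinj
  have himage : univ.image f = univ.erase e := by
    refine eq_of_subset_of_card_le (fun y hy ↦ ?_) ?_
    · obtain ⟨x, -, rfl⟩ := mem_image.mp hy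
      exact mem_erase.mpr ⟨fun hx ↦ he ⟨x, hx⟩, mem_univ _⟩
    · rw [card_erase_of_mem (mem_univ e), card_univ]
      omega
  refine ⟨p, e, Finite.surjective_iff_bijective.mp fun y ↦ ?_⟩
  rcases eq_or_ne y e with rfl | hy
  · exact ⟨p, update_self ..⟩
  obtain ⟨x, -, rfl⟩ := mem_image.mp (himage.ge (mem_erase.mpr ⟨hy, mem_univ y⟩))
  rcases eq_or_ne x p with rfl | hx
  · exact ⟨q, by rw [update_of_ne hne.symm, hpq]⟩
  · exact ⟨x, update_of_ne hx ..⟩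

lemma card_filter_mem_of_bijective {f : α → α} (hf : Bijective f) (T : Finset α) :
    #{x | f x ∈ T} = #T := by
  rw [← card_image_of_injective _ hf.injective]
  congr 1
  ext y
  obtain ⟨x, rfl⟩ := hf.surjective y
  simp [hf.injective.eq_iff]

lemma card_filter_mem_eq_iff_of_update_bijective {f : α → α} {p e : α}
    (hf : Bijective (update f p e)) (T : Finset α) :
    #{x | f x ∈ T} = #T ↔ (f p ∈ T ↔ e ∈ T) := by
  have hrest : ∑ x ∈ univ.erase p, (if update f p e x ∈ T then 1 else 0) =
      ∑ x ∈ univ.erase p, if f x ∈ T then 1 else 0 :=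
    sum_congr rfl fun x hx ↦ by rw [update_of_ne (ne_of_mem_erase hx)]
  rw [← card_filter_mem_of_bijective hf T, card_filter, card_filter,
    ← add_sum_erase univ _ (mem_univ p),
    ← add_sum_erase univ (fun x ↦ if update f p e x ∈ T then 1 else 0) (mem_univ p), hrest,
    update_self, add_left_inj]
  by_cases hp : f p ∈ T <;> by_cases he : e ∈ T <;> simp [hp, he]

end DefectOne

section CircularLetter

variable {Q A : Type*} [Fintype Q] [DecidableEq Q] {δ : Q → A → Q} {b : A}

lemma mem_preimg_append_replicate {S : Finset Q} {v : List A} {j : ℕ} {q : Q} :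
    q ∈ preimg δ S (v ++ List.replicate j b) ↔ (δ · b)^[j] (act δ q v) ∈ (S : Set Q) := by
  rw [mem_preimg, act_append, act_replicate, mem_coe]

lemma card_preimg_replicate (hb : Bijective (δ · b)) (S : Finset Q) (j : ℕ) :
    #(preimg δ S (List.replicate j b)) = #S := by
  induction j with
  | zero => rw [List.replicate_zero, preimg_nil]
  | succ j ih => rw [List.replicate_succ, preimg_cons, card_filter_mem_of_bijective hb, ih]

lemma sum_card_preimg_append_replicate (hb : IsCircular (δ · b)) (S : Finset Q) (v : List A) :
    ∑ j ∈ range (minimalPeriod (Set.preimage (δ · b)) (S : Set Q)),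
        #(preimg δ S (v ++ List.replicate j b)) =
      ∑ _j ∈ range (minimalPeriod (Set.preimage (δ · b)) (S : Set Q)), #S := by
  set r := minimalPeriod (Set.preimage (δ · b)) (S : Set Q)
  have hcount (u : List A) : ∑ j ∈ range r, #(preimg δ S (u ++ List.replicate j b)) =
      ∑ q, Nat.count (fun j ↦ (δ · b)^[j] (act δ q u) ∈ (S : Set Q)) r := by
    simp only [Nat.count_eq_card_filter_range, ← mem_preimg_append_replicate]
    simpa only [bipartiteAbove, bipartiteBelow, filter_univ_mem] using
      sum_card_bipartiteAbove_eq_sum_card_bipartiteBelow (s := range r) (t := univ)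
        fun j q ↦ q ∈ preimg δ S (u ++ List.replicate j b)
  calc ∑ j ∈ range r, #(preimg δ S (v ++ List.replicate j b))
    _ = ∑ j ∈ range r, #(preimg δ S ([] ++ List.replicate j b)) := by
      rw [hcount, hcount]
      exact sum_congr rfl fun q _ ↦ hb.count_iterate_mem_eq S ..
    _ = ∑ _j ∈ range r, #S := sum_congr rfl fun j _ ↦
      card_preimg_replicate (Finite.surjective_iff_bijective.mp hb.surjective) S j

lemma exists_card_lt_card_preimg_append_replicate (hb : IsCircular (δ · b)) {S : Finset Q}
    {v : List A} {j : ℕ} (hj : j < minimalPeriod (Set.preimage (δ · b)) (S : Set Q))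
    (hne : #(preimg δ S (v ++ List.replicate j b)) ≠ #S) :
    ∃ i < minimalPeriod (Set.preimage (δ · b)) (S : Set Q),
      #S < #(preimg δ S (v ++ List.replicate i b)) := by
  by_contra! hle
  exact hne ((sum_eq_sum_iff_of_le fun i hi ↦ hle i (mem_range.mp hi)).mp
    (sum_card_preimg_append_replicate hb S v) j (mem_range.mpr hj))

lemma exists_short_card_preimg_ne [Nonempty Q] (hb : IsCircular (δ · b))
    (hdefect : ∀ c, Fintype.card Q ≤ #(univ.image (δ · c)) + 1) {S : Finset Q} {w : List A}
    (hw : #(preimg δ S w) ≠ #S) :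
    ∃ (v : List A) (j : ℕ),
      v.length + minimalPeriod (Set.preimage (δ · b)) (S : Set Q) ≤ Fintype.card Q + 1 ∧
      j < minimalPeriod (Set.preimage (δ · b)) (S : Set Q) ∧
      #(preimg δ S (v ++ List.replicate j b)) ≠ #S := by
  have hperiod := hb.minimalPeriod_le_card_quotient (S : Set Q)
  have hclasses : Nat.card (Quotient (rotationSetoid (δ · b) (S : Set Q))) ≤ Fintype.card Q :=
    Nat.card_eq_fintype_card (α := Q) ▸
      Nat.card_le_card_of_surjective _ Quotient.mk_surjective
  obtain ⟨c, u₀, hu₀⟩ := exists_card_preimg_cons_ne hw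
  obtain ⟨p, e, hbij⟩ := exists_update_bijective (hdefect c)
  have hletter (u : List A) : #(preimg δ S (c :: u)) = #(preimg δ S u) ↔
      (δ p c ∈ preimg δ S u ↔ e ∈ preimg δ S u) :=
    (preimg_cons δ S c u).symm ▸ card_filter_mem_eq_iff_of_update_bijective hbij (preimg δ S u)
  have hsep : ¬ rotationSetoid (δ · b) (S : Set Q) (act δ (δ p c) u₀) (act δ e u₀) := fun h ↦
    hu₀ ((hletter u₀).mpr (by simpa using rotationSetoid_iff.mp h 0))
  obtain ⟨u, hulen, hu⟩ := exists_short_separating_word hsep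
  rw [Nat.card_eq_fintype_card] at hulen
  obtain ⟨j, hj, hne⟩ :=
    exists_lt_minimalPeriod_of_not_rotationSetoid (hb.minimalPeriod_preimage_pos _) hu
  rw [← mem_preimg_append_replicate, ← mem_preimg_append_replicate, ← hletter] at hne
  by_cases hcard : #(preimg δ S (u ++ List.replicate j b)) = #S
  · exact ⟨c :: u, j, by rw [List.length_cons]; omega, hj, hcard ▸ hne⟩
  · exact ⟨u, j, by omega, hj, hcard⟩

theorem exists_card_lt_card_preimg_of_circular_letter (hb : IsCircular (δ · b))
    (hdefect : ∀ c, Fintype.card Q ≤ #(univ.image (δ · c)) + 1)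
    (hsync : ∃ w : List A, #(img δ univ w) = 1) {S : Finset Q} (hne : S.Nonempty)
    (hS : S ≠ univ) :
    ∃ w : List A, w.length ≤ Fintype.card Q ∧ #S < #(preimg δ S w) := by
  obtain ⟨w, hw⟩ := hsync
  have : Nonempty Q := hne.to_type
  obtain ⟨v, j, hvlen, hj, hvj⟩ := exists_short_card_preimg_ne hb hdefect
    (card_preimg_ne_of_card_img_univ_eq_one hw hne hS)
  obtain ⟨i, hi, hlt⟩ := exists_card_lt_card_preimg_append_replicate hb hj hvj
  exact ⟨v ++ List.replicate i b,
    by rw [List.length_append, List.length_replicate]; omega, hlt⟩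

lemma exists_not_injective_letter [Nontrivial Q] (hsync : ∃ w : List A, #(img δ univ w) = 1) :
    ∃ c, ¬ Injective (δ · c) := by
  by_contra! hinj
  obtain ⟨w, hw⟩ := hsync
  have hw_inj : Injective (act δ · w) := by
    clear hw
    induction w with
    | nil => exact injective_id
    | cons c w ih => exact ih.comp (hinj c)
  rw [img, card_image_of_injective _ hw_inj, card_univ] at hw
  exact Fintype.one_lt_card.ne' hw

theorem exists_short_reset_word_of_circular_letter [Nontrivial Q] (hb : IsCircular (δ · b))
    (hdefect : ∀ c, Fintype.card Q ≤ #(univ.image (δ · c)) + 1)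
    (hsync : ∃ w : List A, #(img δ univ w) = 1) :
    ∃ w : List A, #(img δ univ w) = 1 ∧ w.length ≤ (Fintype.card Q - 1) ^ 2 := by
  obtain ⟨a, ha⟩ := exists_not_injective_letter hsync
  obtain ⟨p, q, hpq, hne⟩ := not_injective_iff.mp ha
  have hpair : 2 ≤ #(preimg δ {δ p a} [a]) := by
    rw [← card_pair hne]
    exact card_le_card (by simp [insert_subset_iff, act, hpq])
  obtain ⟨m, hm⟩ := Nat.exists_eq_add_of_le' (Fintype.one_lt_card (α := Q))
  obtain ⟨w, hw, hwlen⟩ := exists_preimg_eq_univ_of_extension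
    (fun _ ↦ exists_card_lt_card_preimg_of_circular_letter hb hdefect hsync)
    (card_pos.mp (by omega)) (show _ ≤ #(preimg δ {δ p a} [a]) + m by omega)
  rw [← preimg_append] at hw
  refine ⟨w ++ [a], card_eq_one.mpr ⟨_, img_univ_eq_singleton_of_preimg_eq_univ hw⟩, ?_⟩
  calc (w ++ [a]).length = w.length + 1 := List.length_append
    _ ≤ m * Fintype.card Q + 1 := Nat.succ_le_succ hwlen
    _ = (Fintype.card Q - 1) ^ 2 := by rw [hm, Nat.add_succ_sub_one]; ring

end CircularLetter

section CoSingletons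

variable {Q A : Type*} [Fintype Q] [DecidableEq Q] {δ : Q → A → Q}

lemma exists_letter_missing_of_img_eq_erase {w : List A} {x : Q}
    (hw : img δ univ w = univ.erase x) :
    ∃ (c : A) (y : Q) (u : List A), univ.image (δ · c) = univ.erase y ∧
      (∀ d ∈ u, Surjective (δ · d)) ∧ act δ y u = x := by
  induction w using List.reverseRecOn generalizing x with
  | nil => exact absurd (hw ▸ mem_img_univ.mpr ⟨x, rfl⟩) (notMem_erase x univ)
  | append_singleton v c ih =>
    have hv : (img δ univ v).image (δ · c) = univ.erase x := by
      rw [← hw, img, img, image_image]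
      exact image_congr fun q _ ↦ (act_append δ q v [c]).symm
    by_cases hc : Surjective (δ · c)
    · obtain ⟨y, rfl⟩ := hc x
      have hinj : Injective (δ · c) := Finite.injective_iff_surjective.mpr hc
      have hy : img δ univ v = univ.erase y := image_injective hinj <| by
        rw [hv, image_erase hinj, image_univ_of_surjective hc]
      obtain ⟨a, z, u, ha, hu, rfl⟩ := ih hy
      refine ⟨a, z, u ++ [c], ha, ?_, act_append δ z u [c]⟩
      simpa [or_imp, forall_and] using ⟨hu, hc⟩
    · refine ⟨c, x, [], ?_, by simp, rfl⟩
      have hsub : univ.erase x ⊆ univ.image (δ · c) :=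
        hv ▸ image_subset_image (subset_univ _)
      refine (eq_of_subset_of_card_le hsub ?_).symm
      rw [card_erase_of_mem (mem_univ x), card_univ]
      exact Nat.le_sub_one_of_lt (card_lt_univ_of_notMem
        (mt (fun h ↦ by simpa using h) (not_forall.mp hc).choose_spec))

lemma card_le_card_of_forall_not_surjective [Fintype A] (hA : ∀ c, ¬ Surjective (δ · c))
    (hmiss : ∀ x, ∃ w : List A, img δ univ w = univ.erase x) :
    Fintype.card Q ≤ Fintype.card A := by
  have hletter (x : Q) : ∃ c, univ.image (δ · c) = univ.erase x := by
    obtain ⟨w, hw⟩ := hmiss x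
    obtain ⟨c, y, _ | ⟨d, u⟩, hc, hu, rfl⟩ := exists_letter_missing_of_img_eq_erase hw
    · exact ⟨c, hc⟩
    · exact absurd (hu d List.mem_cons_self) (hA d)
  choose c hc using hletter
  refine Fintype.card_le_of_injective c fun x y hxy ↦ (erase_inj univ (mem_univ x)).mp ?_
  rw [← hc x, hxy, hc y]

lemma not_surjective_of_image_eq_erase {f : Q → Q} {y : Q} (hf : univ.image f = univ.erase y) :
    ¬ Surjective f := fun hsurj ↦
  notMem_erase y univ (hf.le ((image_univ_of_surjective hsurj).ge (mem_univ y)))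

lemma exists_image_eq_erase_and_orbit_eq_univ [Nonempty Q] {a b : A} (hab : ∀ c, c ≠ b → c = a)
    (hb : Surjective (δ · b)) (hmiss : ∀ x, ∃ w : List A, img δ univ w = univ.erase x) :
    ∃ e, univ.image (δ · a) = univ.erase e ∧ ∀ x, ∃ k, (δ · b)^[k] e = x := by
  have hletter (x : Q) : ∃ y, univ.image (δ · a) = univ.erase y ∧ ∃ k, (δ · b)^[k] y = x := by
    obtain ⟨w, hw⟩ := hmiss x
    obtain ⟨c, y, u, hc, hu, rfl⟩ := exists_letter_missing_of_img_eq_erase hw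
    have hc' := not_surjective_of_image_eq_erase hc
    obtain rfl : c = a := hab c fun h ↦ hc' (h ▸ hb)
    have hub : u = List.replicate u.length b :=
      List.eq_replicate_of_mem fun d hd ↦ by_contra fun hdb ↦ hc' (hab d hdb ▸ hu d hd)
    exact ⟨y, hc, u.length, by rw [← act_replicate, ← hub]⟩
  obtain ⟨e, he, -⟩ := hletter (Classical.arbitrary Q)
  refine ⟨e, he, fun x ↦ ?_⟩
  obtain ⟨y, hy, horbit⟩ := hletter x
  rwa [(erase_inj univ (mem_univ e)).mp (he.symm.trans hy)]

lemma isCircular_and_defect_le_one_of_surjective_letter [Nonempty Q] [Fintype A]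
    (hA : Fintype.card A = 2) {b : A} (hb : Surjective (δ · b))
    (hmiss : ∀ x, ∃ w : List A, img δ univ w = univ.erase x) :
    IsCircular (δ · b) ∧ ∀ c, Fintype.card Q ≤ #(univ.image (δ · c)) + 1 := by
  obtain ⟨a, -, ha⟩ := (Nat.card_eq_two_iff' b).mp (Nat.card_eq_fintype_card.trans hA)
  obtain ⟨e, he, horbit⟩ := exists_image_eq_erase_and_orbit_eq_univ ha hb hmiss
  refine ⟨isCircular_of_bijective_of_orbit_eq_univ (Finite.surjective_iff_bijective.mp hb) horbit,
    fun c ↦ ?_⟩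
  rcases eq_or_ne c b with rfl | hc
  · rw [image_univ_of_surjective hb, card_univ]
    exact Nat.le_succ _
  · rw [ha c hc, he, card_erase_of_mem (mem_univ e), card_univ]
    omega

lemma card_img_univ_singleton_eq_one [Nonempty Q] {c : A} (hQ : Fintype.card Q ≤ 2)
    (hc : ¬ Surjective (δ · c)) : #(img δ univ [c]) = 1 := by
  have hpos : 0 < #(img δ univ [c]) := card_pos.mpr (univ_nonempty.image _)
  obtain ⟨y, hy⟩ := not_forall.mp hc
  have hlt : #(img δ univ [c]) < Fintype.card Q := card_lt_univ_of_notMem (mt mem_img_univ.mp hy)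
  omega

end CoSingletons

theorem cerny_conjecture_binary_completelyReachable_general {Q A : Type*} [Fintype Q]
    [DecidableEq Q] [Fintype A] (hA : Fintype.card A = 2) (δ : Q → A → Q)
    (hmiss : ∀ P : Finset Q, P.Nonempty → #P + 1 = Fintype.card Q → ∃ w, img δ univ w = P)
    (hsync : ∃ w : List A, #(img δ univ w) = 1) :
    ∃ w : List A, #(img δ univ w) = 1 ∧ w.length ≤ (Fintype.card Q - 1) ^ 2 := by
  have : Nonempty Q := by
    obtain ⟨w, hw⟩ := hsync
    exact (card_pos.mp (hw ▸ one_pos)).to_type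
  cases subsingleton_or_nontrivial Q with
  | inl _ =>
    exact ⟨[], (card_le_one_of_subsingleton _).antisymm (univ_nonempty.image _).card_pos,
      Nat.zero_le _⟩
  | inr _ =>
    have herase (x : Q) : ∃ w, img δ univ w = univ.erase x :=
      hmiss _ (univ_nontrivial.erase_nonempty) (card_erase_add_one (mem_univ x))
    by_cases hperm : ∃ b, Surjective (δ · b)
    · obtain ⟨b, hb⟩ := hperm
      obtain ⟨hcirc, hdefect⟩ := isCircular_and_defect_le_one_of_surjective_letter hA hb herase
      exact exists_short_reset_word_of_circular_letter hcirc hdefect hsync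
    · rw [not_exists] at hperm
      have hQ : Fintype.card Q ≤ 2 := hA ▸ card_le_card_of_forall_not_surjective hperm herase
      obtain ⟨c⟩ : Nonempty A := Fintype.card_pos_iff.mp (by omega)
      have hlen : 1 ≤ Fintype.card Q - 1 := Nat.le_sub_one_of_lt Fintype.one_lt_card
      exact ⟨[c], card_img_univ_singleton_eq_one hQ (hperm c), Nat.one_le_pow _ _ hlen⟩

/-- The Černý conjecture holds for completely reachable automata with two input letters. -/
theorem cerny_conjecture_binary_completelyReachable {Q A : Type*} [Fintype Q] [DecidableEq Q]
    [Nonempty Q] [Fintype A] (hA : Fintype.card A = 2)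
    (δ : Q → A → Q) (h : CompletelyReachable δ) :
    ∃ w : List A, (img δ Finset.univ w).card = 1 ∧ w.length ≤ (Fintype.card Q - 1) ^ 2 := by
  obtain ⟨w, hw⟩ := h {Classical.arbitrary Q} (singleton_nonempty _)
  exact cerny_conjecture_binary_completelyReachable_general hA δ (fun P hP _ ↦ h P hP)
    ⟨w, card_eq_one.mpr ⟨_, hw⟩⟩
end

section
/- Let A = ⟨Q, Σ⟩ be a completely reachable DFA with |Q| = n ≥ 2. Then there exists a word w ∈ Σ* of length at most n·(⌈n/2⌉ − 1) + 1 such that 2·|Q·w| ≤ n. -/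
open Finset

/-!
If `2 * |Q·w| > n`, then some state of `Q·w` has a unique preimage `q` under `w`, so prefixing `w`
with any word `u` such that `q ∉ Q·u` makes the image strictly smaller. Such a `u` can be found of
length at most `n`: a shortest word `u` with `Q·u = Q \ {q}` never visits the same set of states
twice, and it only visits `Q` and the `n` sets of size `n - 1`. Starting from a single letter that
is not a permutation and repeating this at most `⌈n/2⌉ - 1` times gives the word.
-/

section Image

variable {α β : Type*} [DecidableEq β] {f : α → β} {s t : Finset α}

theorem exists_unique_preimage_of_card_lt (h : #s < #(s.image f) * 2) :
    ∃ a ∈ s, ∀ b ∈ s, f b = f a → b = a := by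
  obtain ⟨y, hy, hcard⟩ := exists_card_fiber_lt_of_card_lt_mul h
  obtain ⟨a, ha, rfl⟩ := mem_image.1 hy
  refine ⟨a, ha, fun b hb hba => ?_⟩
  exact card_le_one.1 (Nat.le_of_lt_succ hcard) b (mem_filter.2 ⟨hb, hba⟩) a
    (mem_filter.2 ⟨ha, rfl⟩)

theorem image_ssubset_image_of_unique_preimage {a : α} (hst : s ⊆ t) (has : a ∉ s) (hat : a ∈ t)
    (hf : ∀ b ∈ s, f b = f a → b = a) : s.image f ⊂ t.image f := by
  refine (ssubset_iff_of_subset (image_subset_image hst)).2 ⟨f a, mem_image_of_mem f hat, ?_⟩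
  intro hmem
  obtain ⟨b, hb, hba⟩ := mem_image.1 hmem
  exact has (hf b hb hba ▸ hb)

end Image

theorem card_filter_card_le_card_add_one (α : Type*) [Fintype α] :
    #{s : Finset α | Fintype.card α ≤ #s + 1} ≤ Fintype.card α + 1 := by
  classical
  have hsub : ({s : Finset α | Fintype.card α ≤ #s + 1} : Finset (Finset α)) ⊆
      insert univ (univ.image fun a => {a}ᶜ) := by
    intro s hs
    rcases eq_or_ne s univ with rfl | hne
    · exact mem_insert_self _ _
    · obtain ⟨a, ha⟩ := not_forall.1 (mt eq_univ_iff_forall.2 hne)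
      have hsa : s ⊆ {a}ᶜ := subset_compl_singleton.2 ha
      have hcard : #({a}ᶜ : Finset α) ≤ #s := by
        rw [card_compl, card_singleton]
        exact Nat.sub_le_of_le_add (mem_filter.1 hs).2
      obtain rfl : s = {a}ᶜ := eq_of_subset_of_card_le hsa hcard
      exact mem_insert_of_mem (mem_image_of_mem _ (mem_univ a))
  calc _ ≤ #(insert univ (univ.image fun a : α => ({a}ᶜ : Finset α))) := card_le_card hsub
    _ ≤ #(univ.image fun a : α => ({a}ᶜ : Finset α)) + 1 := card_insert_le _ _
    _ ≤ Fintype.card α + 1 := Nat.add_le_add_right card_image_le 1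

section Words

variable {Q A : Type*} [DecidableEq Q] {δ : Q → A → Q}

theorem img_nil (δ : Q → A → Q) (P : Finset Q) : img δ P [] = P := image_id

theorem img_append (δ : Q → A → Q) (P : Finset Q) (u v : List A) :
    img δ P (u ++ v) = img δ (img δ P u) v := by
  simp only [img, act, List.foldl_append, image_image, Function.comp_def]

theorem card_img_append_le (δ : Q → A → Q) (P : Finset Q) (u v : List A) :
    #(img δ P (u ++ v)) ≤ #(img δ P u) := by
  rw [img_append]
  exact card_image_le

theorem img_eq_self_of_forall_letter {P : Finset Q} (h : ∀ a, img δ P [a] = P) (w : List A) :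
    img δ P w = P := by
  induction w with
  | nil => exact img_nil δ P
  | cons a w ih => rw [← List.singleton_append, img_append, h a, ih]

theorem img_take_ne_of_minimal {P T : Finset Q} {w : List A}
    (hw : MinimalFor (fun v => img δ P v = T) List.length w) {i j : ℕ} (hij : i < j)
    (hj : j ≤ w.length) : img δ P (w.take i) ≠ img δ P (w.take j) := by
  intro heq
  have hcut : img δ P (w.take i ++ w.drop j) = T := by
    rw [img_append, heq, ← img_append, List.take_append_drop, hw.prop]
  refine hw.not_lt hcut ?_
  rw [List.length_append, List.length_take, List.length_drop]
  omega

variable [Fintype Q]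

theorem exists_img_eq_length_lt {P T : Finset Q} (h : ∃ w, img δ P w = T) :
    ∃ w, img δ P w = T ∧ w.length < #{S : Finset Q | #T ≤ #S} := by
  obtain ⟨w, hw⟩ := exists_minimalFor_of_wellFoundedLT (fun v => img δ P v = T) List.length h
  refine ⟨w, hw.prop, Nat.lt_of_succ_le ?_⟩
  have hmaps : ∀ i ∈ range (w.length + 1),
      img δ P (w.take i) ∈ ({S : Finset Q | #T ≤ #S} : Finset (Finset Q)) := by
    intro i _
    rw [mem_filter_univ, ← hw.prop]
    simpa only [List.take_append_drop] using card_img_append_le δ P (w.take i) (w.drop i)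
  have hinj : Set.InjOn (fun i => img δ P (w.take i)) (range (w.length + 1)) := by
    intro i hi j hj heq
    rw [mem_coe, mem_range_succ_iff] at hi hj
    rcases lt_trichotomy i j with hij | hij | hij
    · exact absurd heq (img_take_ne_of_minimal hw hij hj)
    · exact hij
    · exact absurd heq.symm (img_take_ne_of_minimal hw hij hi)
  simpa only [card_range] using card_le_card_of_injOn _ hmaps hinj

theorem exists_notMem_img_length_le {q : Q} (h : ∃ w, img δ univ w = {q}ᶜ) :
    ∃ u : List A, u.length ≤ Fintype.card Q ∧ q ∉ img δ univ u := by
  obtain ⟨u, hu, hlen⟩ := exists_img_eq_length_lt h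
  refine ⟨u, Nat.le_of_lt_succ (hlen.trans_le ?_), by simp [hu]⟩
  simpa only [card_compl, card_singleton, tsub_le_iff_right] using
    card_filter_card_le_card_add_one Q

theorem exists_letter_card_img_lt {w : List A} (hw : img δ univ w ≠ univ) :
    ∃ a, #(img δ univ [a]) < Fintype.card Q := by
  by_contra! h
  exact hw (img_eq_self_of_forall_letter (fun a => (card_eq_iff_eq_univ _).1
    ((card_le_univ _).antisymm (h a))) w)

theorem exists_prefix_card_img_lt (h : ∀ q, ∃ w, img δ univ w = {q}ᶜ) {w : List A}
    (hw : Fintype.card Q < 2 * #(img δ univ w)) :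
    ∃ u : List A, u.length ≤ Fintype.card Q ∧ #(img δ univ (u ++ w)) < #(img δ univ w) := by
  obtain ⟨q, hq, huniq⟩ : ∃ q ∈ univ, ∀ p ∈ univ, act δ p w = act δ q w → p = q :=
    exists_unique_preimage_of_card_lt (by rwa [card_univ, mul_comm])
  obtain ⟨u, hlen, hqu⟩ := exists_notMem_img_length_le (h q)
  refine ⟨u, hlen, ?_⟩
  rw [img_append]
  exact card_lt_card (image_ssubset_image_of_unique_preimage (subset_univ _) hqu hq
    fun p _ => huniq p (mem_univ p))

theorem exists_length_le_card_img_le_half_or_add_lt (h : ∀ q, ∃ w, img δ univ w = {q}ᶜ) (k : ℕ) :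
    ∃ w : List A, w.length ≤ Fintype.card Q * k + 1 ∧
      (2 * #(img δ univ w) ≤ Fintype.card Q ∨ #(img δ univ w) + k < Fintype.card Q) := by
  induction k with
  | zero =>
    rcases isEmpty_or_nonempty Q with _ | ⟨⟨q⟩⟩
    · exact ⟨[], by simp, .inl (by simp [img_nil])⟩
    · obtain ⟨w, hw⟩ := h q
      have hne : img δ univ w ≠ univ := by simp [hw]
      obtain ⟨a, ha⟩ := exists_letter_card_img_lt hne
      exact ⟨[a], by simp, .inr ha⟩
  | succ k ih =>
    obtain ⟨w, hlen, hcard⟩ := ih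
    rw [Nat.mul_succ]
    rcases le_or_gt (2 * #(img δ univ w)) (Fintype.card Q) with hhalf | hhalf
    · exact ⟨w, by omega, .inl hhalf⟩
    · obtain ⟨u, hu, hlt⟩ := exists_prefix_card_img_lt h hhalf
      exact ⟨u ++ w, by rw [List.length_append]; omega, .inr (by omega)⟩

end Words

theorem halving_word_general {Q A : Type*} [Fintype Q] [DecidableEq Q]
    (δ : Q → A → Q) (h : ∀ q, ∃ w, img δ univ w = {q}ᶜ) :
    ∃ w : List A, w.length ≤ Fintype.card Q * ((Fintype.card Q + 1) / 2 - 1) + 1 ∧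
      2 * #(img δ univ w) ≤ Fintype.card Q := by
  obtain ⟨w, hlen, hcard⟩ :=
    exists_length_le_card_img_le_half_or_add_lt h ((Fintype.card Q + 1) / 2 - 1)
  exact ⟨w, hlen, by omega⟩

/-- In a completely reachable DFA with n ≥ 2 states, there is a word of length at most
n·(⌈n/2⌉ − 1) + 1 whose image has size at most n/2. -/
theorem halving_word {Q A : Type*} [Fintype Q] [DecidableEq Q]
    (δ : Q → A → Q) (hn : 2 ≤ Fintype.card Q) (h : CompletelyReachable δ) :
    ∃ w : List A, w.length ≤ Fintype.card Q * ((Fintype.card Q + 1) / 2 - 1) + 1 ∧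
      2 * (img δ Finset.univ w).card ≤ Fintype.card Q := by
  have : Nontrivial Q := Fintype.one_lt_card_iff_nontrivial.1 hn
  exact halving_word_general δ fun q => h {q}ᶜ ((exists_ne q).imp (by simp))
end
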